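/- Let N ≥ 2, μ₁ ∈ ℝ and μ₂ < -(N-2-μ₁)²/4. Let Ω ⊂ ℝ^N be a bounded smooth domain containing the origin and let f ∈ C^γ_loc(Ω̄ \ {0}) for some γ ∈ (0,1) be nonnegative and not identically zero. Then there is no nonnegative classical solution u ∈ C²(Ω \ {0}) of ℒ_{μ₁,μ₂}u = f in Ω \ {0} with u = 0 on ∂Ω. -/

import Mathlib

open MeasureTheory Filter Metric Set Topology

noncomputable section

/-- Euclidean space `ℝ^N`. -/
abbrev E (N : ℕ) := EuclideanSpace ℝ (Fin N)

/-- The Laplacian, as the sum of second derivatives in the coordinate directions. -/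
def lap (N : ℕ) (u : E N → ℝ) (x : E N) : ℝ :=
  ∑ i, fderiv ℝ (fun y => fderiv ℝ u y (EuclideanSpace.single i 1)) x (EuclideanSpace.single i 1)

/-- The CKN operator `ℒ_{μ₁,μ₂} u = -Δu + μ₁|x|⁻² x·∇u + μ₂|x|⁻² u`. -/
def ckn (N : ℕ) (μ₁ μ₂ : ℝ) (u : E N → ℝ) (x : E N) : ℝ :=
  -lap N u x + μ₁ / ‖x‖ ^ 2 * fderiv ℝ u x x + μ₂ / ‖x‖ ^ 2 * u x

/-- `τ₊(μ₁,μ₂)`. -/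
def tauPlus (N : ℕ) (μ₁ μ₂ : ℝ) : ℝ :=
  ((2 - (N : ℝ) + μ₁) + Real.sqrt ((2 - (N : ℝ) + μ₁) ^ 2 + 4 * μ₂)) / 2

/-- `τ₋(μ₁,μ₂)`. -/
def tauMinus (N : ℕ) (μ₁ μ₂ : ℝ) : ℝ :=
  ((2 - (N : ℝ) + μ₁) - Real.sqrt ((2 - (N : ℝ) + μ₁) ^ 2 + 4 * μ₂)) / 2

/-- Surface measure of the unit sphere `𝕊^{N-1}` in `ℝ^N`. -/
def sphereArea (N : ℕ) : ℝ := N * (volume (ball (0 : E N) 1)).toReal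

/-- Local β-Hölder continuity of `f` on a set `s`. -/
def LocHolderOn (N : ℕ) (β : ℝ) (f : E N → ℝ) (s : Set (E N)) : Prop :=
  ∀ x ∈ s, ∃ t ∈ nhdsWithin x s, ∃ C : NNReal, HolderOnWith C β.toNNReal f t

/-!
In the Emden–Fowler variable `t = log ‖x‖` the equation `ℒ u = 0` for radial functions has constant
coefficients, and below the Hardy threshold `μ₂ = -(N - 2 - μ₁) ^ 2 / 4` its solutions oscillate.
Oscillating slightly slower gives, in every punctured ball around the origin, a spherical shell with
a strict subsolution `φ` that is positive somewhere in the shell and zero on its boundary. There a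
supersolution `u` cannot be positive: at a maximum of `φ / u` a multiple of `φ` would touch `u` from
below. By the strong minimum principle a nonnegative supersolution on the connected set `Ω \ {0}` is
therefore identically zero, and hence so is every `f` with `0 ≤ f ≤ ℒ u`.
-/

section Topology

lemma isCompact_norm_preimage_Icc {V : Type*} [SeminormedAddCommGroup V] [ProperSpace V]
    (r₁ r₂ : ℝ) : IsCompact ((norm : V → ℝ) ⁻¹' Icc r₁ r₂) :=
  (isCompact_closedBall 0 r₂).of_isClosed_subset (isClosed_Icc.preimage continuous_norm)
    fun _ hx => mem_closedBall_zero_iff.mpr hx.2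

variable {V : Type*} [NormedAddCommGroup V] [NormedSpace ℝ V]

lemma isConnected_ball_sdiff_center_of_one_lt_rank (h : 1 < Module.rank ℝ V) (c : V) {r : ℝ}
    (hr : 0 < r) : IsConnected (ball c r \ {c}) := by
  set e := OpenPartialHomeomorph.univBall c r
  have hcont : Continuous e := OpenPartialHomeomorph.continuous_univBall c r
  have hinj : Function.Injective e :=
    injOn_univ.mp (OpenPartialHomeomorph.univBall_source c r ▸ e.injOn)
  have himage : e '' {0}ᶜ = ball c r \ {c} := by
    rw [compl_eq_univ_sdiff, image_sdiff hinj, image_singleton,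
      OpenPartialHomeomorph.univBall_apply_zero, ← OpenPartialHomeomorph.univBall_source c r,
      e.image_source_eq_target, OpenPartialHomeomorph.univBall_target c hr]
  exact himage ▸ (isConnected_compl_singleton_of_one_lt_rank h 0).image e hcont.continuousOn

lemma isPreconnected_sdiff_singleton_of_one_lt_rank (h : 1 < Module.rank ℝ V) {U : Set V}
    (hUo : IsOpen U) (hUc : IsPreconnected U) (c : V) : IsPreconnected (U \ {c}) := by
  classical
  by_cases hc : c ∈ U
  swap
  · rwa [sdiff_singleton_eq_self hc]
  obtain ⟨r, hr, hball⟩ := Metric.isOpen_iff.mp hUo c hc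
  have hsub : ball c r \ {c} ⊆ U \ {c} := sdiff_subset_sdiff_left hball
  have hconn := isConnected_ball_sdiff_center_of_one_lt_rank h c hr
  obtain ⟨p, hp⟩ := hconn.nonempty
  refine isPreconnected_of_forall_constant fun f hf x hx y hy => ?_
  have hloc : ∀ q ∈ ball c r, Function.update f c (f p) q = f p := by
    intro q hq
    by_cases hqc : q = c
    · rw [hqc, Function.update_self]
    · rw [Function.update_of_ne hqc]
      exact hconn.isPreconnected.constant (hf.mono hsub) ⟨hq, hqc⟩ hp
  have hext : ContinuousOn (Function.update f c (f p)) U := by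
    intro q hq
    refine ContinuousAt.continuousWithinAt ?_
    by_cases hqc : q = c
    · refine continuousAt_const.congr (f := fun _ => f p) ?_
      rw [hqc]
      filter_upwards [ball_mem_nhds c hr] with z hz using (hloc z hz).symm
    · refine (continuousAt_update_of_ne hqc).mpr ?_
      exact hf.continuousAt ((hUo.sdiff isClosed_singleton).mem_nhds ⟨hq, hqc⟩)
  simpa only [Function.update_of_ne hx.2, Function.update_of_ne hy.2] using
    hUc.constant hext hx.1 hy.1

end Topology

section SecondDerivatives

lemma deriv_deriv_nonneg_of_isLocalMin {g : ℝ → ℝ} {t : ℝ} (hg : ContinuousAt g t)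
    (hmin : IsLocalMin g t) : 0 ≤ deriv (deriv g) t := by
  by_contra! hneg
  have hmax : IsLocalMax g t := isLocalMax_of_deriv_deriv_neg hneg hmin.deriv_eq_zero hg
  have hconst : g =ᶠ[𝓝 t] fun _ => g t := by
    filter_upwards [hmax, hmin] with s h₁ h₂ using le_antisymm h₁ h₂
  have hzero : deriv (deriv g) t = 0 := by rw [hconst.deriv.deriv_eq]; simp
  exact hneg.ne hzero

variable {V : Type*} [NormedAddCommGroup V] [NormedSpace ℝ V] {v w : V → ℝ} {z : V}

lemma eventually_differentiableAt_of_contDiffAt_two (hw : ContDiffAt ℝ 2 w z) :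
    ∀ᶠ y in 𝓝 z, DifferentiableAt ℝ w y :=
  (hw.eventually (by simp)).mono fun _ hy => hy.differentiableAt two_ne_zero

lemma differentiableAt_fderiv_apply (hw : ContDiffAt ℝ 2 w z) (e : V) :
    DifferentiableAt ℝ (fun y => fderiv ℝ w y e) z :=
  ((hw.fderiv_right (m := 1) (by norm_num)).differentiableAt one_ne_zero).clm_apply
    (differentiableAt_const e)

lemma fderiv_fderiv_apply_nonneg_of_isLocalMin (hw : ContDiffAt ℝ 2 w z) (hmin : IsLocalMin w z)
    (e : V) : 0 ≤ fderiv ℝ (fun y => fderiv ℝ w y e) z e := by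
  set line : ℝ → V := fun t => z + t • e
  have hline (t : ℝ) : HasDerivAt line e t := by
    simpa only [one_smul, id_eq] using ((hasDerivAt_id t).smul_const e).const_add z
  have hz : line 0 = z := by simp [line]
  have htendsto : Tendsto line (𝓝 0) (𝓝 z) := hz ▸ (hline 0).continuousAt.tendsto
  have hderiv : deriv (w ∘ line) =ᶠ[𝓝 0] (fun y => fderiv ℝ w y e) ∘ line := by
    filter_upwards [htendsto.eventually (eventually_differentiableAt_of_contDiffAt_two hw)]
      with t ht
    exact (ht.hasFDerivAt.comp_hasDerivAt t (hline t)).deriv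
  have hderiv₂ : deriv (deriv (w ∘ line)) 0 = fderiv ℝ (fun y => fderiv ℝ w y e) z e := by
    rw [hderiv.deriv_eq]
    exact ((differentiableAt_fderiv_apply hw e).hasFDerivAt.comp_hasDerivAt_of_eq 0
      (hline 0) hz.symm).deriv
  rw [← hderiv₂]
  refine deriv_deriv_nonneg_of_isLocalMin ?_ ?_
  · exact hw.continuousAt.comp_of_eq (hline 0).continuousAt hz
  · filter_upwards [htendsto.eventually hmin] with t ht
    simpa [hz] using ht

lemma fderiv_fderiv_sub_apply (hv : ContDiffAt ℝ 2 v z) (hw : ContDiffAt ℝ 2 w z) (e : V) :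
    fderiv ℝ (fun y => fderiv ℝ (fun x => v x - w x) y e) z e =
      fderiv ℝ (fun y => fderiv ℝ v y e) z e - fderiv ℝ (fun y => fderiv ℝ w y e) z e := by
  have hfst : (fun y => fderiv ℝ (fun x => v x - w x) y e) =ᶠ[𝓝 z]
      fun y => fderiv ℝ v y e - fderiv ℝ w y e := by
    filter_upwards [eventually_differentiableAt_of_contDiffAt_two hv,
      eventually_differentiableAt_of_contDiffAt_two hw] with y hvy hwy
    rw [fderiv_fun_sub hvy hwy, sub_apply]
  rw [hfst.fderiv_eq, fderiv_fun_sub (differentiableAt_fderiv_apply hv e)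
    (differentiableAt_fderiv_apply hw e), sub_apply]

lemma fderiv_comp_eq_deriv_smul {G : ℝ → ℝ} (hG : DifferentiableAt ℝ G (v z))
    (hv : DifferentiableAt ℝ v z) :
    fderiv ℝ (fun x => G (v x)) z = deriv G (v z) • fderiv ℝ v z :=
  (hG.hasDerivAt.comp_hasFDerivAt z hv.hasFDerivAt).fderiv

lemma fderiv_fderiv_comp_apply {G : ℝ → ℝ} (hG : ContDiffAt ℝ 2 G (v z))
    (hv : ContDiffAt ℝ 2 v z) (e : V) :
    fderiv ℝ (fun y => fderiv ℝ (fun x => G (v x)) y e) z e =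
      deriv (deriv G) (v z) * fderiv ℝ v z e ^ 2 +
        deriv G (v z) * fderiv ℝ (fun y => fderiv ℝ v y e) z e := by
  have hfst : (fun y => fderiv ℝ (fun x => G (v x)) y e) =ᶠ[𝓝 z]
      fun y => deriv G (v y) * fderiv ℝ v y e := by
    filter_upwards [eventually_differentiableAt_of_contDiffAt_two hv,
      hv.continuousAt.eventually (eventually_differentiableAt_of_contDiffAt_two hG)] with y hvy hGy
    rw [fderiv_comp_eq_deriv_smul hGy hvy, smul_apply, smul_eq_mul]
  have hG' : DifferentiableAt ℝ (deriv G) (v z) := by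
    simpa using differentiableAt_fderiv_apply hG 1
  have hsnd := (hG'.hasDerivAt.comp_hasFDerivAt z
    (hv.differentiableAt two_ne_zero).hasFDerivAt).mul
      (differentiableAt_fderiv_apply hv e).hasFDerivAt
  rw [hfst.fderiv_eq]
  refine (DFunLike.congr_fun hsnd.fderiv e).trans ?_
  simp only [add_apply, smul_apply, smul_eq_mul, Function.comp_apply]
  ring

end SecondDerivatives

section Operator

variable {N : ℕ} {μ₁ μ₂ : ℝ} {u v w : E N → ℝ} {z : E N}

lemma lap_nonneg_of_isLocalMin (hw : ContDiffAt ℝ 2 w z) (hmin : IsLocalMin w z) :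
    0 ≤ lap N w z :=
  Finset.sum_nonneg fun _ _ => fderiv_fderiv_apply_nonneg_of_isLocalMin hw hmin _

lemma lap_sub (hv : ContDiffAt ℝ 2 v z) (hw : ContDiffAt ℝ 2 w z) :
    lap N (fun x => v x - w x) z = lap N v z - lap N w z := by
  simp only [lap, fderiv_fderiv_sub_apply hv hw, Finset.sum_sub_distrib]

lemma lap_comp {G : ℝ → ℝ} (hG : ContDiffAt ℝ 2 G (v z)) (hv : ContDiffAt ℝ 2 v z) :
    lap N (fun x => G (v x)) z =
      deriv (deriv G) (v z) * ‖fderiv ℝ v z‖ ^ 2 + deriv G (v z) * lap N v z := by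
  simp only [lap, fderiv_fderiv_comp_apply hG hv, Finset.sum_add_distrib, ← Finset.mul_sum,
    (EuclideanSpace.basisFun (Fin N) ℝ).norm_dual, EuclideanSpace.basisFun_apply]

lemma ckn_eq_ckn_zero_add (u : E N → ℝ) (z : E N) :
    ckn N μ₁ μ₂ u z = ckn N μ₁ 0 u z + μ₂ / ‖z‖ ^ 2 * u z := by
  simp [ckn]

lemma ckn_sub (hv : ContDiffAt ℝ 2 v z) (hw : ContDiffAt ℝ 2 w z) :
    ckn N μ₁ μ₂ (fun x => v x - w x) z = ckn N μ₁ μ₂ v z - ckn N μ₁ μ₂ w z := by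
  simp only [ckn, lap_sub hv hw, fderiv_fun_sub (hv.differentiableAt two_ne_zero)
    (hw.differentiableAt two_ne_zero), sub_apply]
  ring

lemma ckn_comp {G : ℝ → ℝ} (hG : ContDiffAt ℝ 2 G (v z)) (hv : ContDiffAt ℝ 2 v z) :
    ckn N μ₁ μ₂ (fun x => G (v x)) z =
      -(deriv (deriv G) (v z) * ‖fderiv ℝ v z‖ ^ 2) + deriv G (v z) * ckn N μ₁ 0 v z +
        μ₂ / ‖z‖ ^ 2 * G (v z) := by
  rw [ckn, lap_comp hG hv, fderiv_comp_eq_deriv_smul (hG.differentiableAt two_ne_zero)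
    (hv.differentiableAt two_ne_zero), smul_apply, smul_eq_mul, ckn]
  ring

lemma ckn_const_mul (c : ℝ) (hv : ContDiffAt ℝ 2 v z) :
    ckn N μ₁ μ₂ (fun x => c * v x) z = c * ckn N μ₁ μ₂ v z := by
  have hderiv : deriv (fun s : ℝ => c * s) = fun _ => c := by ext s; simp
  rw [ckn_comp (G := fun s => c * s) (contDiffAt_const.mul contDiffAt_id) hv, hderiv, deriv_const,
    ckn_eq_ckn_zero_add (μ₂ := μ₂) v z]
  ring

lemma ckn_le_of_isLocalMin (hw : ContDiffAt ℝ 2 w z) (hmin : IsLocalMin w z) :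
    ckn N μ₁ μ₂ w z ≤ μ₂ / ‖z‖ ^ 2 * w z := by
  have hlap := lap_nonneg_of_isLocalMin hw hmin
  simp only [ckn, hmin.fderiv_eq_zero, zero_apply]
  linarith

end Operator

section RadialFunctions

variable {N : ℕ} {μ₁ μ₂ : ℝ}

lemma contDiff_norm_sub_sq (y : E N) : ContDiff ℝ 2 fun x : E N => ‖x - y‖ ^ 2 :=
  (contDiff_id.sub contDiff_const).norm_sq ℝ

lemma fderiv_norm_sub_sq (y z : E N) :
    fderiv ℝ (fun x : E N => ‖x - y‖ ^ 2) z = 2 • innerSL ℝ (z - y) := by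
  simpa using ((hasFDerivAt_id z).sub_const y).norm_sq.fderiv

lemma norm_fderiv_norm_sub_sq_sq (y z : E N) :
    ‖fderiv ℝ (fun x : E N => ‖x - y‖ ^ 2) z‖ ^ 2 = 4 * ‖z - y‖ ^ 2 := by
  rw [fderiv_norm_sub_sq, ← Nat.cast_smul_eq_nsmul ℝ, norm_smul, innerSL_apply_norm, mul_pow]
  norm_num

lemma lap_norm_sub_sq (y z : E N) : lap N (fun x => ‖x - y‖ ^ 2) z = 2 * N := by
  have hterm (e : E N) : fderiv ℝ (fun x => fderiv ℝ (fun x => ‖x - y‖ ^ 2) x e) z e =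
      2 * ‖e‖ ^ 2 := by
    have hfst : (fun x => fderiv ℝ (fun x => ‖x - y‖ ^ 2) x e) =
        fun x => 2 * innerSL ℝ e (x - y) := by
      ext x
      simp [fderiv_norm_sub_sq, real_inner_comm e, inner_sub_right]
    have hsnd := (((innerSL ℝ e).hasFDerivAt (x := z - y)).comp z
      ((hasFDerivAt_id z).sub_const y)).const_mul 2
    rw [hfst]
    refine (DFunLike.congr_fun hsnd.fderiv e).trans ?_
    simp
  simp only [lap, hterm, PiLp.norm_single]
  simp [mul_comm]

lemma ckn_zero_norm_sub_sq (y z : E N) :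
    ckn N μ₁ 0 (fun x => ‖x - y‖ ^ 2) z =
      -(2 * N - 2 * (μ₁ / ‖z‖ ^ 2 * inner ℝ (z - y) z)) := by
  simp only [ckn, lap_norm_sub_sq, fderiv_norm_sub_sq, smul_apply,
    innerSL_apply_apply, nsmul_eq_mul, Nat.cast_ofNat]
  ring

lemma contDiffAt_log_norm {z : E N} (hz : z ≠ 0) :
    ContDiffAt ℝ 2 (fun x : E N => Real.log ‖x‖) z :=
  (contDiffAt_norm ℝ hz).log (norm_ne_zero_iff.mpr hz)

lemma log_norm_eq_log_norm_sub_zero_sq_div_two :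
    (fun x : E N => Real.log ‖x‖) = fun x => Real.log (‖x - 0‖ ^ 2) / 2 := by
  ext x
  rw [sub_zero, Real.log_pow, Nat.cast_ofNat, mul_div_cancel_left₀ _ two_ne_zero]

lemma deriv_log_div_two : deriv (fun s => Real.log s / 2) = fun s => s⁻¹ / 2 := by
  ext s
  simp

lemma norm_fderiv_log_norm_sq {z : E N} (hz : z ≠ 0) :
    ‖fderiv ℝ (fun x : E N => Real.log ‖x‖) z‖ ^ 2 = 1 / ‖z‖ ^ 2 := by
  have hnorm : ‖z‖ ≠ 0 := norm_ne_zero_iff.mpr hz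
  have hlog : DifferentiableAt ℝ (fun s => Real.log s / 2) (‖z - 0‖ ^ 2) :=
    (Real.differentiableAt_log (by simpa using hz)).div_const 2
  rw [log_norm_eq_log_norm_sub_zero_sq_div_two, fderiv_comp_eq_deriv_smul
    (G := fun s => Real.log s / 2) (v := fun x => ‖x - 0‖ ^ 2) hlog
    ((contDiff_norm_sub_sq 0).differentiable two_ne_zero z),
    deriv_log_div_two, norm_smul, mul_pow, norm_fderiv_norm_sub_sq_sq, Real.norm_eq_abs, sq_abs,
    sub_zero]
  field_simp
  norm_num

lemma ckn_zero_log_norm {z : E N} (hz : z ≠ 0) :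
    ckn N μ₁ 0 (fun x => Real.log ‖x‖) z = (2 - N + μ₁) / ‖z‖ ^ 2 := by
  have hnorm : ‖z‖ ≠ 0 := norm_ne_zero_iff.mpr hz
  have hderiv₂ (s : ℝ) : deriv (fun s : ℝ => s⁻¹ / 2) s = -(s ^ 2)⁻¹ / 2 := by simp
  have hlog : ContDiffAt ℝ 2 (fun s => Real.log s / 2) (‖z - 0‖ ^ 2) :=
    (Real.contDiffAt_log.mpr (by simpa using hz)).div_const 2
  rw [log_norm_eq_log_norm_sub_zero_sq_div_two, ckn_comp (G := fun s => Real.log s / 2) hlog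
    (contDiff_norm_sub_sq 0).contDiffAt, deriv_log_div_two, hderiv₂, norm_fderiv_norm_sub_sq_sq,
    ckn_zero_norm_sub_sq, sub_zero, real_inner_self_eq_norm_sq]
  field_simp
  ring

lemma ckn_comp_log_norm {g : ℝ → ℝ} {z : E N} (hz : z ≠ 0)
    (hg : ContDiffAt ℝ 2 g (Real.log ‖z‖)) :
    ckn N μ₁ μ₂ (fun x => g (Real.log ‖x‖)) z =
      (-deriv (deriv g) (Real.log ‖z‖) + (2 - N + μ₁) * deriv g (Real.log ‖z‖) +
        μ₂ * g (Real.log ‖z‖)) / ‖z‖ ^ 2 := by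
  rw [ckn_comp hg (contDiffAt_log_norm hz), norm_fderiv_log_norm_sq hz, ckn_zero_log_norm hz]
  ring

end RadialFunctions

section Comparison

variable {N : ℕ} {μ₁ μ₂ : ℝ} {K : Set (E N)}

lemma nonneg_of_ckn_zero_pos_of_neg {w : E N → ℝ} (hK : IsCompact K) (hcont : ContinuousOn w K)
    (hfrontier : ∀ x ∈ frontier K, 0 ≤ w x)
    (hneg : ∀ x ∈ interior K, w x < 0 → ContDiffAt ℝ 2 w x ∧ 0 < ckn N μ₁ 0 w x) :
    ∀ x ∈ K, 0 ≤ w x := by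
  by_contra! ⟨x, hxK, hx⟩
  obtain ⟨z, hzK, hzmin⟩ := hK.exists_isMinOn ⟨x, hxK⟩ hcont
  have hz : w z < 0 := (hzmin hxK).trans_lt hx
  have hzint : z ∈ interior K := by
    by_contra hzint
    exact hz.not_ge (hfrontier z ⟨subset_closure hzK, hzint⟩)
  obtain ⟨hw, hckn⟩ := hneg z hzint hz
  have hle := ckn_le_of_isLocalMin (μ₁ := μ₁) (μ₂ := 0) hw
    (hzmin.isLocalMin (mem_interior_iff_mem_nhds.mp hzint))
  rw [zero_div, zero_mul] at hle
  exact hckn.not_ge hle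

-- At a maximum of `φ / u`, with value `M`, the function `u - M⁻¹ φ` attains the minimum `0`.
lemma exists_mem_interior_ckn_nonneg {u φ : E N → ℝ} (hK : IsCompact K)
    (hu : ContinuousOn u K) (hu₂ : ∀ x ∈ interior K, ContDiffAt ℝ 2 u x)
    (hupos : ∀ x ∈ K, 0 < u x) (hckn : ∀ x ∈ interior K, 0 ≤ ckn N μ₁ μ₂ u x)
    (hφ : ContinuousOn φ K) (hφ₂ : ∀ x ∈ interior K, ContDiffAt ℝ 2 φ x)
    (hfrontier : ∀ x ∈ frontier K, φ x ≤ 0) (hpos : ∃ x ∈ K, 0 < φ x) :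
    ∃ x ∈ interior K, 0 < φ x ∧ 0 ≤ ckn N μ₁ μ₂ φ x := by
  obtain ⟨x, hxK, hx⟩ := hpos
  obtain ⟨z, hzK, hzmax⟩ := hK.exists_isMaxOn ⟨x, hxK⟩
    (hφ.div hu fun y hy => (hupos y hy).ne')
  set M : ℝ := φ z / u z
  have hM : 0 < M := (div_pos hx (hupos x hxK)).trans_le (hzmax hxK)
  have hφz : φ z = M * u z := (div_mul_cancel₀ _ (hupos z hzK).ne').symm
  have hφz_pos : 0 < φ z := hφz ▸ mul_pos hM (hupos z hzK)
  have hzint : z ∈ interior K := by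
    by_contra hzint
    exact hφz_pos.not_ge (hfrontier z ⟨subset_closure hzK, hzint⟩)
  set w : E N → ℝ := fun y => u y - M⁻¹ * φ y
  have hwz : w z = 0 := by simp [w, hφz, hM.ne']
  have hmin : IsLocalMin w z := by
    filter_upwards [mem_interior_iff_mem_nhds.mp hzint] with y hy
    have hφy : φ y ≤ M * u y := (div_le_iff₀ (hupos y hy)).mp (hzmax hy)
    rw [hwz]
    exact sub_nonneg.mpr ((inv_mul_le_iff₀ hM).mpr hφy)
  have hMφ : ContDiffAt ℝ 2 (fun y => M⁻¹ * φ y) z := contDiffAt_const.mul (hφ₂ z hzint)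
  have hle := ckn_le_of_isLocalMin (μ₁ := μ₁) (μ₂ := μ₂) ((hu₂ z hzint).sub hMφ) hmin
  rw [show u z - M⁻¹ * φ z = 0 from hwz, mul_zero, ckn_sub (hu₂ z hzint) hMφ,
    ckn_const_mul _ (hφ₂ z hzint)] at hle
  refine ⟨z, hzint, hφz_pos, ?_⟩
  exact nonneg_of_mul_nonneg_right ((hckn z hzint).trans (sub_nonpos.mp hle)) (inv_pos.mpr hM)

end Comparison

section Barrier

variable {N : ℕ}

/-- The radial barrier of the Hopf lemma: it is positive inside the ball of centre `y` and radius
`R`, vanishes on its boundary and, for `α` large, is a strict subsolution away from `y`. -/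
def hopfBarrier (α : ℝ) (y : E N) (R : ℝ) (x : E N) : ℝ :=
  Real.exp (-α * ‖x - y‖ ^ 2) - Real.exp (-α * R ^ 2)

variable {α R : ℝ} {x y : E N}

lemma contDiff_hopfBarrier : ContDiff ℝ 2 (hopfBarrier α y R) :=
  (contDiff_const.mul (contDiff_norm_sub_sq y)).exp.sub contDiff_const

lemma hopfBarrier_le_one (hα : 0 ≤ α) : hopfBarrier α y R x ≤ 1 := by
  have hle : Real.exp (-α * ‖x - y‖ ^ 2) ≤ 1 :=
    Real.exp_le_one_iff.mpr (mul_nonpos_of_nonpos_of_nonneg (neg_nonpos.mpr hα) (sq_nonneg _))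
  exact (sub_le_self _ (Real.exp_pos _).le).trans hle

lemma hopfBarrier_eq_zero (hx : x ∈ sphere y R) : hopfBarrier α y R x = 0 := by
  rw [hopfBarrier, mem_sphere_iff_norm.mp hx, sub_self]

lemma hopfBarrier_pos (hα : 0 < α) (hx : x ∈ ball y R) : 0 < hopfBarrier α y R x := by
  have hlt : ‖x - y‖ ^ 2 < R ^ 2 := by
    gcongr
    exact mem_ball_iff_norm.mp hx
  exact sub_pos.mpr (Real.exp_lt_exp.mpr (mul_lt_mul_of_neg_left hlt (neg_neg_of_pos hα)))

lemma ckn_zero_hopfBarrier (μ₁ α R : ℝ) (x y : E N) :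
    ckn N μ₁ 0 (hopfBarrier α y R) x = α * Real.exp (-α * ‖x - y‖ ^ 2) *
      (2 * N - 2 * (μ₁ / ‖x‖ ^ 2 * inner ℝ (x - y) x) - 4 * α * ‖x - y‖ ^ 2) := by
  set G : ℝ → ℝ := fun s => Real.exp (-α * s) - Real.exp (-α * R ^ 2)
  have hexp (s : ℝ) : HasDerivAt (fun s => Real.exp (-α * s)) (Real.exp (-α * s) * -α) s := by
    simpa using ((hasDerivAt_id s).const_mul (-α)).exp
  have hderiv : deriv G = fun s => Real.exp (-α * s) * -α :=
    funext fun s => ((hexp s).sub_const _).deriv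
  have hderiv₂ (s : ℝ) : deriv (deriv G) s = Real.exp (-α * s) * -α * -α := by
    rw [hderiv]
    exact ((hexp s).mul_const _).deriv
  have hG : ContDiff ℝ 2 G := (contDiff_const.mul contDiff_id).exp.sub contDiff_const
  rw [show hopfBarrier α y R = fun x => G (‖x - y‖ ^ 2) from rfl,
    ckn_comp hG.contDiffAt (contDiff_norm_sub_sq y).contDiffAt, hderiv₂, hderiv,
    norm_fderiv_norm_sub_sq_sq, ckn_zero_norm_sub_sq]
  ring

lemma exists_ckn_zero_hopfBarrier_neg (μ₁ R : ℝ) {r : ℝ} (hr : 0 < r) {K : Set (E N)}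
    (hK : IsCompact K) (h0 : (0 : E N) ∉ K) (y : E N) :
    ∃ α > 0, ∀ x ∈ K, r ≤ ‖x - y‖ → ckn N μ₁ 0 (hopfBarrier α y R) x < 0 := by
  obtain ⟨C, hC⟩ : ∃ C, ∀ x ∈ K, 2 * N - 2 * (μ₁ / ‖x‖ ^ 2 * inner ℝ (x - y) x) ≤ C := by
    have hnorm : ∀ x ∈ K, ‖x‖ ^ 2 ≠ 0 := fun x hx =>
      pow_ne_zero 2 (norm_ne_zero_iff.mpr (ne_of_mem_of_not_mem hx h0))
    obtain ⟨C, hC⟩ := hK.bddAbove_image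
      (f := fun x : E N => 2 * N - 2 * (μ₁ / ‖x‖ ^ 2 * inner ℝ (x - y) x)) (by
        fun_prop (disch := assumption))
    exact ⟨C, fun x hx => hC (mem_image_of_mem _ hx)⟩
  refine ⟨(|C| + 1) / (4 * r ^ 2), by positivity, fun x hx hrx => ?_⟩
  set α : ℝ := (|C| + 1) / (4 * r ^ 2)
  have hα : 0 < α := by positivity
  have hlarge : |C| + 1 ≤ 4 * α * ‖x - y‖ ^ 2 := calc
    |C| + 1 = 4 * α * r ^ 2 := by simp only [α]; field_simp
    _ ≤ 4 * α * ‖x - y‖ ^ 2 := by gcongr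
  rw [ckn_zero_hopfBarrier]
  refine mul_neg_of_pos_of_neg (mul_pos hα (Real.exp_pos _)) ?_
  linarith [hC x hx, le_abs_self C]

end Barrier

section Oscillation

/-- The solution of `g'' - 2 a g' + (a ^ 2 + b ^ 2) g = 0` vanishing at `t₁`; evaluated at
`t = log ‖x‖`, it is the oscillating subsolution of the nonexistence argument. -/
def dampedSine (a b t₁ t : ℝ) : ℝ := Real.exp (a * t) * Real.sin (b * (t - t₁))

variable {a b t₁ : ℝ}

lemma contDiff_dampedSine : ContDiff ℝ 2 (dampedSine a b t₁) :=
  (contDiff_const.mul contDiff_id).exp.mul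
    (contDiff_const.mul (contDiff_id.sub contDiff_const)).sin

lemma dampedSine_self : dampedSine a b t₁ t₁ = 0 := by
  simp [dampedSine]

lemma dampedSine_add_pi_div (hb : b ≠ 0) : dampedSine a b t₁ (t₁ + Real.pi / b) = 0 := by
  rw [dampedSine, add_sub_cancel_left, mul_div_cancel₀ _ hb, Real.sin_pi, mul_zero]

lemma dampedSine_add_pi_div_two_div_pos (hb : b ≠ 0) :
    0 < dampedSine a b t₁ (t₁ + Real.pi / 2 / b) := by
  rw [dampedSine, add_sub_cancel_left, mul_div_cancel₀ _ hb, Real.sin_pi_div_two, mul_one]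
  exact Real.exp_pos _

lemma deriv_deriv_dampedSine (t : ℝ) :
    deriv (deriv (dampedSine a b t₁)) t =
      2 * a * deriv (dampedSine a b t₁) t - (a ^ 2 + b ^ 2) * dampedSine a b t₁ t := by
  have hexp (t : ℝ) : HasDerivAt (fun t => Real.exp (a * t)) (Real.exp (a * t) * a) t := by
    simpa using ((hasDerivAt_id t).const_mul a).exp
  have hphase (t : ℝ) : HasDerivAt (fun t => b * (t - t₁)) b t := by
    simpa using ((hasDerivAt_id t).sub_const t₁).const_mul b
  have hderiv : deriv (dampedSine a b t₁) = fun t =>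
      Real.exp (a * t) * a * Real.sin (b * (t - t₁)) +
        Real.exp (a * t) * (Real.cos (b * (t - t₁)) * b) :=
    funext fun t => ((hexp t).mul (hphase t).sin).deriv
  have hderiv₂ := (((hexp t).mul_const a).mul (hphase t).sin).add
    ((hexp t).mul ((hphase t).cos.mul_const b))
  rw [hderiv]
  refine hderiv₂.deriv.trans ?_
  rw [dampedSine]
  ring

lemma ckn_dampedSine_log_norm {N : ℕ} {μ₁ μ₂ : ℝ} {x : E N} (hx : x ≠ 0) :
    ckn N μ₁ μ₂ (fun x => dampedSine ((2 - N + μ₁) / 2) b t₁ (Real.log ‖x‖)) x =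
      (b ^ 2 + ((N : ℝ) - 2 - μ₁) ^ 2 / 4 + μ₂) / ‖x‖ ^ 2 *
        dampedSine ((2 - N + μ₁) / 2) b t₁ (Real.log ‖x‖) := by
  rw [ckn_comp_log_norm hx contDiff_dampedSine.contDiffAt, deriv_deriv_dampedSine]
  ring

lemma dampedSine_log_norm_eq_zero_of_mem_frontier {V : Type*} [SeminormedAddCommGroup V]
    (hb : 0 < b) {x : V}
    (hx : x ∈ frontier (norm ⁻¹' Icc (Real.exp t₁) (Real.exp (t₁ + Real.pi / b)))) :
    dampedSine a b t₁ (Real.log ‖x‖) = 0 := by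
  have hle : Real.exp t₁ ≤ Real.exp (t₁ + Real.pi / b) :=
    Real.exp_le_exp.mpr (le_add_of_nonneg_right (by positivity))
  have hnorm := continuous_norm.frontier_preimage_subset _ hx
  rw [frontier_Icc hle] at hnorm
  rcases hnorm with hinner | houter
  · rw [show ‖x‖ = Real.exp t₁ from hinner, Real.log_exp, dampedSine_self]
  · rw [show ‖x‖ = Real.exp (t₁ + Real.pi / b) from houter, Real.log_exp,
      dampedSine_add_pi_div hb.ne']

lemma exists_dampedSine_log_norm_pos {V : Type*} [NormedAddCommGroup V] [NormedSpace ℝ V]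
    [Nontrivial V] (a t₁ : ℝ) (hb : 0 < b) :
    ∃ x : V, x ∈ norm ⁻¹' Icc (Real.exp t₁) (Real.exp (t₁ + Real.pi / b)) ∧
      0 < dampedSine a b t₁ (Real.log ‖x‖) := by
  obtain ⟨x, hx⟩ := exists_norm_eq V (Real.exp_pos (t₁ + Real.pi / 2 / b)).le
  refine ⟨x, ?_, ?_⟩
  · rw [mem_preimage, hx]
    constructor <;> gcongr
    · exact le_add_of_nonneg_right (by positivity)
    · exact half_le_self Real.pi_pos.le
  · rw [hx, Real.log_exp]
    exact dampedSine_add_pi_div_two_div_pos hb.ne'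

end Oscillation

/-- Nonnegative classical supersolutions of `ℒ_{μ₁,μ₂} u = 0` in `D`. -/
structure IsNonnegSupersolution (N : ℕ) (μ₁ μ₂ : ℝ) (u : E N → ℝ) (D : Set (E N)) : Prop where
  contDiffOn : ContDiffOn ℝ 2 u D
  nonneg : ∀ x ∈ D, 0 ≤ u x
  ckn_nonneg : ∀ x ∈ D, 0 ≤ ckn N μ₁ μ₂ u x

namespace IsNonnegSupersolution

variable {N : ℕ} {μ₁ μ₂ : ℝ} {u : E N → ℝ} {D : Set (E N)}

lemma mono {D' : Set (E N)} (h : IsNonnegSupersolution N μ₁ μ₂ u D) (hsub : D' ⊆ D) :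
    IsNonnegSupersolution N μ₁ μ₂ u D' :=
  ⟨h.contDiffOn.mono hsub, fun x hx => h.nonneg x (hsub hx),
    fun x hx => h.ckn_nonneg x (hsub hx)⟩

lemma contDiffAt (h : IsNonnegSupersolution N μ₁ μ₂ u D) (hD : IsOpen D) {x : E N}
    (hx : x ∈ D) : ContDiffAt ℝ 2 u x :=
  h.contDiffOn.contDiffAt (hD.mem_nhds hx)

lemma ckn_zero_nonneg (h : IsNonnegSupersolution N μ₁ μ₂ u D) (hμ₂ : μ₂ ≤ 0) {x : E N}
    (hx : x ∈ D) : 0 ≤ ckn N μ₁ 0 u x := by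
  have hpotential : μ₂ / ‖x‖ ^ 2 * u x ≤ 0 := mul_nonpos_of_nonpos_of_nonneg
    (div_nonpos_of_nonpos_of_nonneg hμ₂ (sq_nonneg _)) (h.nonneg x hx)
  have hsum := h.ckn_nonneg x hx
  rw [ckn_eq_ckn_zero_add] at hsum
  linarith

lemma pos_of_mem_ball (h : IsNonnegSupersolution N μ₁ μ₂ u D) (hμ₂ : μ₂ ≤ 0) (hD : IsOpen D)
    (h0 : (0 : E N) ∉ D) {x y : E N} {R : ℝ} (hball : closedBall y R ⊆ D) (hy : 0 < u y)
    (hx : x ∈ ball y R) : 0 < u x := by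
  have hR : 0 < R := Metric.pos_of_mem_ball hx
  have hyD : y ∈ D := hball (mem_closedBall_self hR.le)
  set m : ℝ := u y / 2
  have hm : 0 < m := half_pos hy
  obtain ⟨r, hr, hmr⟩ := Metric.eventually_nhds_iff.mp
    ((h.contDiffAt hD hyD).continuousAt.eventually (lt_mem_nhds (half_lt_self hy)))
  obtain ⟨α, hα, hbarrier⟩ := exists_ckn_zero_hopfBarrier_neg μ₁ R hr
    (isCompact_closedBall y R) (fun hmem => h0 (hball hmem)) y
  have hmb : ContDiff ℝ 2 fun z => m * hopfBarrier α y R z :=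
    contDiff_const.mul contDiff_hopfBarrier
  have hcomparison : ∀ z ∈ closedBall y R, 0 ≤ u z - m * hopfBarrier α y R z := by
    refine nonneg_of_ckn_zero_pos_of_neg (μ₁ := μ₁) (isCompact_closedBall y R)
      ((h.contDiffOn.continuousOn.mono hball).sub hmb.continuous.continuousOn) ?_ ?_
    · intro z hz
      rw [hopfBarrier_eq_zero (frontier_closedBall_subset_sphere hz), mul_zero, sub_zero]
      exact h.nonneg z (hball (isClosed_closedBall.frontier_subset hz))
    · intro z hz hneg
      have hzR : z ∈ closedBall y R := interior_subset hz
      have hzr : r ≤ ‖z - y‖ := by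
        by_contra! hlt
        have hmz : m < u z := hmr (dist_eq_norm z y ▸ hlt)
        have hle : m * hopfBarrier α y R z ≤ m :=
          mul_le_of_le_one_right hm.le (hopfBarrier_le_one hα.le)
        linarith
      refine ⟨(h.contDiffAt hD (hball hzR)).sub hmb.contDiffAt, ?_⟩
      rw [ckn_sub (h.contDiffAt hD (hball hzR)) hmb.contDiffAt,
        ckn_const_mul _ contDiff_hopfBarrier.contDiffAt]
      have hstrict := mul_neg_of_pos_of_neg hm (hbarrier z hzR hzr)
      linarith [h.ckn_zero_nonneg hμ₂ (hball hzR)]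
  have hpos : 0 < m * hopfBarrier α y R x := mul_pos hm (hopfBarrier_pos hα hx)
  linarith [hcomparison x (ball_subset_closedBall hx)]

theorem pos_of_exists_pos (h : IsNonnegSupersolution N μ₁ μ₂ u D) (hμ₂ : μ₂ ≤ 0)
    (hDo : IsOpen D) (hDc : IsPreconnected D) (h0 : (0 : E N) ∉ D) (hpos : ∃ x ∈ D, 0 < u x) :
    ∀ x ∈ D, 0 < u x := by
  set P : Set (E N) := D ∩ u ⁻¹' Ioi 0
  have hPo : IsOpen P := h.contDiffOn.continuousOn.isOpen_inter_preimage hDo isOpen_Ioi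
  have hPclosed : closure P ∩ D ⊆ P := by
    rintro p ⟨hpP, hpD⟩
    obtain ⟨ρ, hρ, hball⟩ := Metric.isOpen_iff.mp hDo p hpD
    obtain ⟨y, ⟨-, hy⟩, hpy⟩ := Metric.mem_closure_iff.mp hpP (ρ / 2) (half_pos hρ)
    have hsub : closedBall y (ρ / 2) ⊆ D := by
      refine (closedBall_subset_ball' ?_).trans hball
      rw [dist_comm]
      linarith
    exact ⟨hpD, h.pos_of_mem_ball hμ₂ hDo h0 hsub hy hpy⟩
  exact fun x hx => (hDc.subset_of_closure_inter_subset hPo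
    (hpos.imp fun y hy => ⟨hy.1, hy⟩) hPclosed hx).2

theorem exists_eq_zero_of_lt_hardy [Nontrivial (E N)] (hμ₂ : μ₂ < -((N : ℝ) - 2 - μ₁) ^ 2 / 4)
    {δ : ℝ} (hδ : 0 < δ) (h : IsNonnegSupersolution N μ₁ μ₂ u (ball 0 δ \ {0})) :
    ∃ x ∈ ball 0 δ \ {0}, u x = 0 := by
  by_contra! hne
  obtain ⟨b, hb, hbsq⟩ : ∃ b > 0, b ^ 2 + ((N : ℝ) - 2 - μ₁) ^ 2 / 4 + μ₂ < 0 := by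
    have hgap : 0 < -(((N : ℝ) - 2 - μ₁) ^ 2 / 4 + μ₂) / 2 := by linarith
    refine ⟨_, Real.sqrt_pos.mpr hgap, ?_⟩
    rw [Real.sq_sqrt hgap.le]
    linarith
  set t₁ : ℝ := Real.log (δ / 2) - Real.pi / b
  set φ : E N → ℝ := fun x => dampedSine ((2 - N + μ₁) / 2) b t₁ (Real.log ‖x‖)
  set K : Set (E N) := norm ⁻¹' Icc (Real.exp t₁) (Real.exp (t₁ + Real.pi / b))
  have hKsub : K ⊆ ball 0 δ \ {0} := by
    rintro x ⟨hx₁, hx₂⟩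
    rw [sub_add_cancel, Real.exp_log (half_pos hδ)] at hx₂
    exact ⟨mem_ball_zero_iff.mpr (hx₂.trans_lt (half_lt_self hδ)),
      norm_pos_iff.mp ((Real.exp_pos t₁).trans_le hx₁)⟩
  have hKint : interior K ⊆ ball 0 δ \ {0} := interior_subset.trans hKsub
  have hφ₂ : ∀ x ∈ K, ContDiffAt ℝ 2 φ x := fun x hx =>
    contDiff_dampedSine.contDiffAt.comp x (contDiffAt_log_norm (hKsub hx).2)
  obtain ⟨z, hz, hφz, hckn⟩ := exists_mem_interior_ckn_nonneg
    (isCompact_norm_preimage_Icc _ _) (h.contDiffOn.continuousOn.mono hKsub)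
    (fun x hx => h.contDiffAt (isOpen_ball.sdiff isClosed_singleton) (hKint hx))
    (fun x hx => (h.nonneg x (hKsub hx)).lt_of_ne' (hne x (hKsub hx)))
    (fun x hx => h.ckn_nonneg x (hKint hx))
    (fun x hx => (hφ₂ x hx).continuousAt.continuousWithinAt)
    (fun x hx => hφ₂ x (interior_subset hx))
    (fun x hx => (dampedSine_log_norm_eq_zero_of_mem_frontier hb hx).le)
    (exists_dampedSine_log_norm_pos _ t₁ hb)
  have hz0 : z ≠ 0 := (hKint hz).2
  rw [ckn_dampedSine_log_norm hz0] at hckn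
  exact hckn.not_gt (mul_neg_of_neg_of_pos (div_neg_of_neg_of_pos hbsq (by positivity)) hφz)

theorem eq_zero_of_lt_hardy (hN : 2 ≤ N) (hμ₂ : μ₂ < -((N : ℝ) - 2 - μ₁) ^ 2 / 4)
    {Ω : Set (E N)} (hΩo : IsOpen Ω) (hΩc : IsPreconnected Ω) (h0Ω : (0 : E N) ∈ Ω)
    (h : IsNonnegSupersolution N μ₁ μ₂ u (Ω \ {0})) : ∀ x ∈ Ω \ {0}, u x = 0 := by
  have hfinrank : 1 < Module.finrank ℝ (E N) := by
    rw [finrank_euclideanSpace_fin]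
    exact hN
  have : Nontrivial (E N) := Module.nontrivial_of_finrank_pos (zero_lt_one.trans hfinrank)
  have hμ₂_nonpos : μ₂ ≤ 0 := by linarith [sq_nonneg ((N : ℝ) - 2 - μ₁)]
  have hconn : IsPreconnected (Ω \ {0}) := isPreconnected_sdiff_singleton_of_one_lt_rank
    (Module.one_lt_rank_of_one_lt_finrank hfinrank) hΩo hΩc 0
  obtain ⟨δ, hδ, hball⟩ := Metric.isOpen_iff.mp hΩo 0 h0Ω
  have hsub : ball 0 δ \ {0} ⊆ Ω \ {0} := sdiff_subset_sdiff_left hball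
  obtain ⟨y, hy, hyu⟩ := (h.mono hsub).exists_eq_zero_of_lt_hardy hμ₂ hδ
  by_contra! ⟨x, hx, hxu⟩
  have hpos := h.pos_of_exists_pos hμ₂_nonpos (hΩo.sdiff isClosed_singleton) hconn
    (fun hmem => hmem.2 rfl) ⟨x, hx, (h.nonneg x hx).lt_of_ne' hxu⟩
  exact (hpos y (hsub hy)).ne' hyu

end IsNonnegSupersolution

lemma LocHolderOn.continuousOn {N : ℕ} {β : ℝ} {f : E N → ℝ} {s : Set (E N)}
    (h : LocHolderOn N β f s) (hβ : 0 < β) : ContinuousOn f s := by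
  intro x hx
  obtain ⟨t, ht, C, hC⟩ := h x hx
  exact ((hC.continuousOn (Real.toNNReal_pos.mpr hβ)).continuousWithinAt
    (mem_of_mem_nhdsWithin hx ht)).mono_of_mem_nhdsWithin ht

theorem stmt5_general (N : ℕ) (hN : 2 ≤ N) (μ₁ μ₂ : ℝ)
    (hμ₂ : μ₂ < -((N : ℝ) - 2 - μ₁) ^ 2 / 4)
    (Ω : Set (E N)) (hΩo : IsOpen Ω) (hΩc : IsPreconnected Ω) (h0Ω : (0 : E N) ∈ Ω)
    (f : E N → ℝ) (hf : ContinuousOn f (closure Ω \ {0}))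
    (hfpos : ∀ x ∈ Ω \ {0}, 0 ≤ f x)
    (hfne : ∃ x ∈ closure Ω \ {0}, f x ≠ 0) :
    ¬ ∃ u : E N → ℝ, ContDiffOn ℝ 2 u (Ω \ {0}) ∧
        (∀ x ∈ Ω \ {0}, 0 ≤ u x) ∧
        (∀ x ∈ Ω \ {0}, f x ≤ ckn N μ₁ μ₂ u x) := by
  rintro ⟨u, hu, hpos, hL⟩
  have hsuper : IsNonnegSupersolution N μ₁ μ₂ u (Ω \ {0}) :=
    ⟨hu, hpos, fun x hx => (hfpos x hx).trans (hL x hx)⟩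
  have hu_zero := hsuper.eq_zero_of_lt_hardy hN hμ₂ hΩo hΩc h0Ω
  have hΩ₀ : IsOpen (Ω \ {0}) := hΩo.sdiff isClosed_singleton
  have hf_zero : EqOn f 0 (Ω \ {0}) := by
    intro x hx
    have hmin : IsLocalMin u x := by
      filter_upwards [hΩ₀.mem_nhds hx] with y hy using (hu_zero x hx).trans_le (hpos y hy)
    have hle := ckn_le_of_isLocalMin (μ₁ := μ₁) (μ₂ := μ₂) (hsuper.contDiffAt hΩ₀ hx) hmin
    rw [hu_zero x hx, mul_zero] at hle
    exact le_antisymm ((hL x hx).trans hle) (hfpos x hx)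
  have hdense : closure Ω \ {0} ⊆ closure (Ω \ {0}) :=
    isOpen_compl_singleton.closure_inter
  obtain ⟨x, hx, hfx⟩ := hfne
  exact hfx (hf_zero.of_subset_closure hf continuousOn_const
    (sdiff_subset_sdiff_left subset_closure) hdense hx)

/-- nonexistence of nonnegative solutions of the Poisson problem
when `μ₂ < -(N-2-μ₁)²/4` and `f ≥ 0`, `f ≢ 0`. -/
theorem stmt5 (N : ℕ) (hN : 2 ≤ N) (μ₁ μ₂ : ℝ)
    (hμ₂ : μ₂ < -((N : ℝ) - 2 - μ₁) ^ 2 / 4)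
    (Ω : Set (E N)) (hΩo : IsOpen Ω) (hΩc : IsConnected Ω)
    (hΩb : Bornology.IsBounded Ω) (h0Ω : (0 : E N) ∈ Ω)
    (γ : ℝ) (hγ : γ ∈ Set.Ioo (0 : ℝ) 1)
    (f : E N → ℝ) (hfreg : LocHolderOn N γ f (closure Ω \ {0}))
    (hfpos : ∀ x ∈ closure Ω \ {0}, 0 ≤ f x)
    (hfne : ∃ x ∈ closure Ω \ {0}, f x ≠ 0) :
    ¬ ∃ u : E N → ℝ, ContDiffOn ℝ 2 u (Ω \ {0}) ∧
        (∀ x ∈ Ω \ {0}, 0 ≤ u x) ∧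
        (∀ x ∈ Ω \ {0}, ckn N μ₁ μ₂ u x = f x) ∧
        (∀ x ∈ frontier Ω, u x = 0) := by
  rintro ⟨u, hu, hpos, hL, -⟩
  exact stmt5_general N hN μ₁ μ₂ hμ₂ Ω hΩo hΩc.isPreconnected h0Ω f (hfreg.continuousOn hγ.1)
    (fun x hx => hfpos x ⟨subset_closure hx.1, hx.2⟩) hfne ⟨u, hu, hpos, fun x hx => (hL x hx).ge⟩
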